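/- With the notation below, suppose b_0+b_2 ≢ b_1+b_3 (mod 2), b_0b_2+b_1b_3 ≡ 1 (mod 2), and ββ̄ ≡ −3 (mod 8). Then: (1) if b_0b_2+b_1b_3 ≡ c_0c_2+c_1c_3 (mod 4), then D_4(b)·D_4(c) = (8k−3)(8l−3) for some integer k and some prime 8l−3 ∈ P with k ≡ l (mod 2); (2) if b_0b_2+b_1b_3 ≢ c_0c_2+c_1c_3 (mod 4), then D_4(b)·D_4(c) = (8k−3)(8l−3) for some integer k and some prime 8l−3 ∈ P with k ≢ l (mod 2). -/

import Mathlib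

open Matrix Complex

def D4 (x0 x1 x2 x3 : ℤ) : ℤ :=
  (Matrix.of ![![x0, x1, x2, x3], ![x3, x0, x1, x2], ![x2, x3, x0, x1], ![x1, x2, x3, x0]]).det

def Pset : Set ℤ := {p : ℤ | Prime p ∧ 0 < p ∧ p ≡ -3 [ZMOD 8]}

def bI (a : ℕ → ℤ) (i : ℕ) : ℤ := (a i + a (i + 8)) + (a (i + 4) + a (i + 12))

def cI (a : ℕ → ℤ) (i : ℕ) : ℤ := (a i + a (i + 8)) - (a (i + 4) + a (i + 12))

def dd (a : ℕ → ℤ) (i : ℕ) : ℤ := a i - a (i + 8)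

noncomputable def alphaD (d : ℕ → ℤ) (i : ℕ) : ℂ := (d i : ℂ) + Complex.I * (d (i + 4) : ℂ)

noncomputable def betaD (d : ℕ → ℤ) : ℂ :=
  (alphaD d 0 + alphaD d 2) ^ 2 - (alphaD d 1 + alphaD d 3) ^ 2

noncomputable def gammaD (d : ℕ → ℤ) : ℂ :=
  (alphaD d 0 - alphaD d 2) ^ 2 + (alphaD d 1 - alphaD d 3) ^ 2

/-!
A circulant determinant of order four factors as `D4 x = (P² - Q²) N`, where `P = x₀ + x₂`,
`Q = x₁ + x₃` and `N = (x₀ - x₂)² + (x₁ - x₃)² = P² + Q² - 4 T` with `T = x₀ x₂ + x₁ x₃`. If `P + Q`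
is odd, then `D4 x ≡ ±(1 - 4 T) (mod 16)`, the sign depending only on the parity of `P`, so it
cancels in `D4 b * D4 c`; comparison with `(8 k - 3) (8 l - 3) ≡ 9 - 8 (k + l) (mod 16)` then gives
the parity of `k + l`. If also `T` is odd and `4 ∣ P Q`, then `N ≡ -3 (mod 8)`, and a sum of two
squares of this form has a prime factor congruent to `-3` modulo `8`.

With `u = α₀ + α₂` and `v = α₁ + α₃`, `|β|² = (|u|² + |v|²)² - 4 (Re u v̄)²`, so `|β|² ≡ -3 (mod 8)`
forces `Re u v̄` to be odd. This number is half the sum of the two products `P Q` belonging to `b`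
and `c`, up to an even number. Since both products are even, exactly one is divisible by `4`.
-/

theorem odd_iff_odd_of_modEq_two {m n : ℤ} (h : m ≡ n [ZMOD 2]) : Odd m ↔ Odd n := by
  rw [Int.odd_iff, Int.odd_iff, h.eq]

theorem even_mul_of_odd_add {m n : ℤ} (h : Odd (m + n)) : Even (m * n) := by
  rw [Int.even_mul]
  by_contra! hmn
  exact Int.not_even_iff_odd.mpr h (Int.even_add.mpr (iff_of_false hmn.1 hmn.2))

theorem sq_modEq_one_of_odd {n : ℤ} (h : Odd n) : n ^ 2 ≡ 1 [ZMOD 8] :=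
  (Int.modEq_iff_dvd.mpr (Int.eight_dvd_sq_sub_one_of_odd h)).symm

theorem pow_four_modEq_one_of_odd {n : ℤ} (h : Odd n) : n ^ 4 ≡ 1 [ZMOD 16] := by
  obtain ⟨r, hr⟩ := Int.eight_dvd_sq_sub_one_of_odd h
  have h_dvd : 16 ∣ n ^ 4 - 1 :=
    ⟨r * (4 * r + 1), by linear_combination (n ^ 2 + 8 * r + 1) * hr⟩
  exact (Int.modEq_iff_dvd.mpr h_dvd).symm

theorem pow_four_modEq_zero_of_even {n : ℤ} (h : Even n) : n ^ 4 ≡ 0 [ZMOD 16] :=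
  Int.modEq_zero_iff_dvd.mpr (pow_dvd_pow_of_dvd h.two_dvd 4)

theorem odd_of_sq_sub_four_mul_sq_modEq {m n : ℤ} (h : m ^ 2 - 4 * n ^ 2 ≡ -3 [ZMOD 8]) :
    Odd n := by
  have h_emod : (m ^ 2 - 4 * n ^ 2) % 8 = -3 % 8 := h
  have hm : Odd m := by
    rw [← Int.odd_pow' two_ne_zero, Int.odd_iff]
    omega
  have hm_sq : m ^ 2 % 8 = 1 % 8 := sq_modEq_one_of_odd hm
  rw [← Int.odd_pow' two_ne_zero, Int.odd_iff]
  omega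

theorem modEq_one_of_forall_prime_dvd {m n : ℕ} (hn : n ≠ 0)
    (h : ∀ p, p.Prime → p ∣ n → p ≡ 1 [MOD m]) : n ≡ 1 [MOD m] := by
  induction n using Nat.recOnMul with
  | zero => exact absurd rfl hn
  | one => rfl
  | prime p hp => exact h p hp dvd_rfl
  | mul a b iha ihb =>
    exact (iha (left_ne_zero_of_mul hn) fun p hp hd => h p hp (hd.mul_right b)).mul
      (ihb (right_ne_zero_of_mul hn) fun p hp hd => h p hp (hd.mul_left a))

theorem exists_prime_dvd_modEq_five_of_isSquare_neg_one {n : ℕ} (h_sq : IsSquare (-1 : ZMod n))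
    (hn : n ≡ 5 [MOD 8]) : ∃ p, p.Prime ∧ p ∣ n ∧ p ≡ 5 [MOD 8] := by
  have hn_mod : n % 8 = 5 := hn
  have hn_ne : n ≠ 0 := by omega
  by_contra! h_no
  suffices h_one : n ≡ 1 [MOD 8] from absurd (h_one.symm.trans hn) (by decide)
  refine modEq_one_of_forall_prime_dvd hn_ne fun p hp hpn => ?_
  have hp_odd : Odd p := Odd.of_dvd_nat (Nat.odd_iff.mpr (by omega)) hpn
  have hp_four : p % 4 ≠ 3 := Nat.mod_four_ne_three_of_mem_primeFactors_of_isSquare_neg_one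
    (Nat.mem_primeFactors.mpr ⟨hp, hpn, hn_ne⟩) h_sq
  have hp_eight : p % 8 ≠ 5 := h_no p hp hpn
  rw [Nat.odd_iff] at hp_odd
  change p % 8 = 1
  omega

theorem exists_prime_dvd_modEq_five_of_eq_sq_add_sq {n x y : ℕ} (hxy : n = x ^ 2 + y ^ 2)
    (hn : n ≡ 5 [MOD 8]) : ∃ p, p.Prime ∧ p ∣ n ∧ p ≡ 5 [MOD 8] := by
  obtain ⟨a, b, rfl, hb_sq⟩ := Nat.eq_sq_add_sq_iff_eq_sq_mul.mp ⟨x, y, hxy⟩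
  have hn_mod : a ^ 2 * b % 8 = 5 := hn
  have h_odd : Odd (a ^ 2 * b) := Nat.odd_iff.mpr (by omega)
  have ha_odd : Odd a := h_odd.of_dvd_nat ((dvd_pow_self a two_ne_zero).mul_right b)
  have ha : a ^ 2 ≡ 1 [MOD 8] :=
    Int.natCast_modEq_iff.mp (mod_cast sq_modEq_one_of_odd ((Int.odd_coe_nat a).mpr ha_odd))
  have hb : b ≡ 5 [MOD 8] := by simpa using (ha.mul_right b).symm.trans hn
  obtain ⟨p, hp, hpb, hp_mod⟩ := exists_prime_dvd_modEq_five_of_isSquare_neg_one hb_sq hb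
  exact ⟨p, hp, hpb.mul_left _, hp_mod⟩

theorem exists_mem_Pset_dvd_sq_add_sq {x y : ℤ} (h : x ^ 2 + y ^ 2 ≡ -3 [ZMOD 8]) :
    ∃ p ∈ Pset, p ∣ x ^ 2 + y ^ 2 := by
  have h_cast : ((x.natAbs ^ 2 + y.natAbs ^ 2 : ℕ) : ℤ) = x ^ 2 + y ^ 2 := by
    rw [Nat.cast_add, Nat.cast_pow, Nat.cast_pow, Int.natAbs_sq, Int.natAbs_sq]
  have h_five : x.natAbs ^ 2 + y.natAbs ^ 2 ≡ 5 [MOD 8] := by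
    rw [← Int.natCast_modEq_iff, h_cast]
    exact h
  obtain ⟨p, hp, hp_dvd, hp_mod⟩ := exists_prime_dvd_modEq_five_of_eq_sq_add_sq rfl h_five
  refine ⟨p, ⟨Nat.prime_iff_prime_int.mp hp, mod_cast hp.pos, ?_⟩, ?_⟩
  · exact Int.natCast_modEq_iff.mpr hp_mod
  · rw [← h_cast]
    exact mod_cast hp_dvd

theorem exists_eq_mul_of_mem_Pset_of_dvd {m p : ℤ} (hp : p ∈ Pset) (hpm : p ∣ m)
    (hm : m ≡ 1 [ZMOD 8]) :
    ∃ k l : ℤ, 8 * l - 3 ∈ Pset ∧ m = (8 * k - 3) * (8 * l - 3) := by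
  obtain ⟨l, rfl⟩ : ∃ l, p = 8 * l - 3 := by
    obtain ⟨l, hl⟩ := Int.modEq_iff_dvd.mp hp.2.2.symm
    exact ⟨l, by linear_combination hl⟩
  obtain ⟨q, rfl⟩ := hpm
  have hq : (8 * l - 3) * q % 8 = 1 % 8 := hm
  obtain ⟨k, rfl⟩ : ∃ k, q = 8 * k - 3 := ⟨(q + 3) / 8, by grind⟩
  exact ⟨k, l, hp, mul_comm _ _⟩

theorem modEq_two_iff_of_mul_modEq {k l s t : ℤ} (hs : Odd s)
    (h : (8 * k - 3) * (8 * l - 3) ≡ 1 - 4 * (s + t) [ZMOD 16]) :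
    k ≡ l [ZMOD 2] ↔ s ≡ t [ZMOD 4] := by
  have h_expand : (8 * k - 3) * (8 * l - 3) = 64 * (k * l) - 24 * (k + l) + 9 := by ring
  rw [Int.odd_iff] at hs
  unfold Int.ModEq at *
  omega

section CirculantDeterminant

variable {x₀ x₁ x₂ x₃ y₀ y₁ y₂ y₃ : ℤ}

theorem D4_eq_mul (x₀ x₁ x₂ x₃ : ℤ) :
    D4 x₀ x₁ x₂ x₃ =
      ((x₀ + x₂) ^ 2 - (x₁ + x₃) ^ 2) * ((x₀ - x₂) ^ 2 + (x₁ - x₃) ^ 2) := by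
  rw [D4, det_succ_row_zero, Fin.sum_univ_four]
  simp only [det_fin_three, submatrix_apply, of_apply, Fin.succAbove,
    Fin.reduceSucc, Fin.reduceCastSucc, Fin.reduceLT, Fin.isValue, Fin.coe_ofNat_eq_mod, cons_val,
    if_true, if_false]
  ring

theorem D4_rotate (x₀ x₁ x₂ x₃ : ℤ) : D4 x₁ x₂ x₃ x₀ = -D4 x₀ x₁ x₂ x₃ := by
  rw [D4_eq_mul, D4_eq_mul]
  ring

theorem D4_modEq_of_odd_of_even (h₀₂ : Odd (x₀ + x₂)) (h₁₃ : Even (x₁ + x₃)) :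
    D4 x₀ x₁ x₂ x₃ ≡ 1 - 4 * (x₀ * x₂ + x₁ * x₃) [ZMOD 16] := by
  have h_sq : (x₀ + x₂) ^ 2 - (x₁ + x₃) ^ 2 ≡ 1 - 0 [ZMOD 4] :=
    ((sq_modEq_one_of_odd h₀₂).of_dvd (by norm_num)).sub
      (Int.modEq_zero_iff_dvd.mpr (pow_dvd_pow_of_dvd h₁₃.two_dvd 2))
  have h_cross : 4 * ((x₀ + x₂) ^ 2 - (x₁ + x₃) ^ 2) ≡ 4 * (1 - 0) [ZMOD 16] :=
    h_sq.mul_left'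
  calc D4 x₀ x₁ x₂ x₃
      = (x₀ + x₂) ^ 4 - (x₁ + x₃) ^ 4
          - 4 * ((x₀ + x₂) ^ 2 - (x₁ + x₃) ^ 2) * (x₀ * x₂ + x₁ * x₃) := by
        rw [D4_eq_mul]
        ring
    _ ≡ 1 - 0 - 4 * (1 - 0) * (x₀ * x₂ + x₁ * x₃) [ZMOD 16] :=
        ((pow_four_modEq_one_of_odd h₀₂).sub (pow_four_modEq_zero_of_even h₁₃)).sub
          (h_cross.mul_right _)
    _ = 1 - 4 * (x₀ * x₂ + x₁ * x₃) := by ring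

theorem D4_modEq_of_even_of_odd (h₀₂ : Even (x₀ + x₂)) (h₁₃ : Odd (x₁ + x₃)) :
    D4 x₀ x₁ x₂ x₃ ≡ -(1 - 4 * (x₀ * x₂ + x₁ * x₃)) [ZMOD 16] := by
  have h_rotate := (D4_modEq_of_odd_of_even h₁₃ (add_comm x₀ x₂ ▸ h₀₂)).neg
  rwa [D4_rotate, neg_neg, add_comm (x₁ * x₃), mul_comm x₂ x₀] at h_rotate

theorem D4_mul_D4_modEq (hx : Odd (x₀ + x₂ + (x₁ + x₃))) (hy : Odd (y₀ + y₂ + (y₁ + y₃)))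
    (hxy : x₀ + x₂ ≡ y₀ + y₂ [ZMOD 2]) :
    D4 x₀ x₁ x₂ x₃ * D4 y₀ y₁ y₂ y₃ ≡
      1 - 4 * (x₀ * x₂ + x₁ * x₃ + (y₀ * y₂ + y₁ * y₃)) [ZMOD 16] := by
  have h_mul (s t : ℤ) : (1 - 4 * s) * (1 - 4 * t) ≡ 1 - 4 * (s + t) [ZMOD 16] :=
    Int.modEq_iff_dvd.mpr ⟨-(s * t), by ring⟩
  refine Int.ModEq.trans ?_ (h_mul _ _)
  have h_parity := odd_iff_odd_of_modEq_two hxy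
  rcases Int.even_or_odd (x₀ + x₂) with hx₀₂ | hx₀₂
  · have hy₀₂ : Even (y₀ + y₂) := by rwa [← Int.not_odd_iff_even, ← h_parity, Int.not_odd_iff_even]
    rw [← neg_mul_neg (1 - _)]
    exact (D4_modEq_of_even_of_odd hx₀₂ ((Int.odd_add'.mp hx).mpr hx₀₂)).mul
      (D4_modEq_of_even_of_odd hy₀₂ ((Int.odd_add'.mp hy).mpr hy₀₂))
  · have hy₀₂ : Odd (y₀ + y₂) := h_parity.mp hx₀₂
    exact (D4_modEq_of_odd_of_even hx₀₂ ((Int.odd_add.mp hx).mp hx₀₂)).mul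
      (D4_modEq_of_odd_of_even hy₀₂ ((Int.odd_add.mp hy).mp hy₀₂))

theorem sq_sub_add_sq_sub_modEq (h_odd : Odd (x₀ + x₂ + (x₁ + x₃)))
    (hT : Odd (x₀ * x₂ + x₁ * x₃)) (h_four : 4 ∣ (x₀ + x₂) * (x₁ + x₃)) :
    (x₀ - x₂) ^ 2 + (x₁ - x₃) ^ 2 ≡ -3 [ZMOD 8] := by
  obtain ⟨t, ht⟩ := hT
  obtain ⟨q, hq⟩ := h_four
  calc (x₀ - x₂) ^ 2 + (x₁ - x₃) ^ 2
      = (x₀ + x₂ + (x₁ + x₃)) ^ 2 + 8 * (-q - t) - 4 := by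
        linear_combination -2 * hq - 4 * ht
    _ ≡ 1 + 0 - 4 [ZMOD 8] :=
        ((sq_modEq_one_of_odd h_odd).add
          (Int.modEq_zero_iff_dvd.mpr (dvd_mul_right _ _))).sub_right 4

theorem exists_mem_Pset_dvd_D4 (h_odd : Odd (x₀ + x₂ + (x₁ + x₃)))
    (hT : Odd (x₀ * x₂ + x₁ * x₃)) (h_four : 4 ∣ (x₀ + x₂) * (x₁ + x₃)) :
    ∃ p ∈ Pset, p ∣ D4 x₀ x₁ x₂ x₃ := by
  obtain ⟨p, hp, hp_dvd⟩ :=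
    exists_mem_Pset_dvd_sq_add_sq (sq_sub_add_sq_sub_modEq h_odd hT h_four)
  exact ⟨p, hp, D4_eq_mul x₀ x₁ x₂ x₃ ▸ hp_dvd.mul_left _⟩

theorem exists_D4_mul_D4_eq (hx : Odd (x₀ + x₂ + (x₁ + x₃)))
    (hTx : Odd (x₀ * x₂ + x₁ * x₃)) (hy : Odd (y₀ + y₂ + (y₁ + y₃)))
    (hTy : Odd (y₀ * y₂ + y₁ * y₃)) (hxy : x₀ + x₂ ≡ y₀ + y₂ [ZMOD 2])
    (h_four : 4 ∣ (x₀ + x₂) * (x₁ + x₃) ∨ 4 ∣ (y₀ + y₂) * (y₁ + y₃)) :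
    ∃ k l : ℤ, 8 * l - 3 ∈ Pset ∧
      D4 x₀ x₁ x₂ x₃ * D4 y₀ y₁ y₂ y₃ = (8 * k - 3) * (8 * l - 3) ∧
      (k ≡ l [ZMOD 2] ↔ x₀ * x₂ + x₁ * x₃ ≡ y₀ * y₂ + y₁ * y₃ [ZMOD 4]) := by
  have h_mod := D4_mul_D4_modEq hx hy hxy
  have h_one : D4 x₀ x₁ x₂ x₃ * D4 y₀ y₁ y₂ y₃ ≡ 1 [ZMOD 8] := by
    obtain ⟨t, ht⟩ := (hTx.add_odd hTy).two_dvd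
    refine (h_mod.of_dvd (by norm_num)).trans (Int.modEq_iff_dvd.mpr ⟨t, ?_⟩)
    linear_combination 4 * ht
  obtain ⟨p, hp, hp_dvd⟩ : ∃ p ∈ Pset, p ∣ D4 x₀ x₁ x₂ x₃ * D4 y₀ y₁ y₂ y₃ := by
    rcases h_four with h_four | h_four
    · obtain ⟨p, hp, hp_dvd⟩ := exists_mem_Pset_dvd_D4 hx hTx h_four
      exact ⟨p, hp, hp_dvd.mul_right _⟩
    · obtain ⟨p, hp, hp_dvd⟩ := exists_mem_Pset_dvd_D4 hy hTy h_four
      exact ⟨p, hp, hp_dvd.mul_left _⟩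
  obtain ⟨k, l, hl, h_eq⟩ := exists_eq_mul_of_mem_Pset_of_dvd hp hp_dvd h_one
  exact ⟨k, l, hl, h_eq, modEq_two_iff_of_mul_modEq hTx (h_eq ▸ h_mod)⟩

end CirculantDeterminant

theorem normSq_sq_sub_sq (u v : ℂ) :
    normSq (u ^ 2 - v ^ 2) =
      (normSq u + normSq v) ^ 2 - 4 * (u * (starRingEnd ℂ) v).re ^ 2 := by
  rw [sq_sub_sq, map_mul, normSq_add, normSq_sub]
  ring

theorem alphaD_add_alphaD (d : ℕ → ℤ) (i j : ℕ) :
    alphaD d i + alphaD d j = ⟨(d i + d j : ℤ), (d (i + 4) + d (j + 4) : ℤ)⟩ := by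
  apply Complex.ext <;> simp [alphaD]

theorem normSq_betaD (d : ℕ → ℤ) :
    normSq (betaD d) =
      (((d 0 + d 2) ^ 2 + (d 4 + d 6) ^ 2 + ((d 1 + d 3) ^ 2 + (d 5 + d 7) ^ 2)) ^ 2
        - 4 * ((d 0 + d 2) * (d 1 + d 3) + (d 4 + d 6) * (d 5 + d 7)) ^ 2 : ℤ) := by
  rw [betaD, normSq_sq_sub_sq]
  simp only [alphaD_add_alphaD, normSq_mk, mul_re, conj_re, conj_im]
  push_cast
  ring

theorem odd_of_betaD_mul_conj_modEq {d : ℕ → ℤ} {n : ℤ}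
    (hn : (n : ℂ) = betaD d * (starRingEnd ℂ) (betaD d)) (h : n ≡ -3 [ZMOD 8]) :
    Odd ((d 0 + d 2) * (d 1 + d 3) + (d 4 + d 6) * (d 5 + d 7)) := by
  rw [mul_conj, normSq_betaD, ofReal_intCast, Int.cast_inj] at hn
  exact odd_of_sq_sub_four_mul_sq_modEq (hn ▸ h)

theorem cI_modEq_bI (a : ℕ → ℤ) (i : ℕ) : cI a i ≡ bI a i [ZMOD 2] :=
  Int.modEq_iff_dvd.mpr ⟨a (i + 4) + a (i + 12), by rw [bI, cI]; ring⟩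

theorem bI_mul_add_cI_mul_modEq (a : ℕ → ℤ) :
    (bI a 0 + bI a 2) * (bI a 1 + bI a 3) + (cI a 0 + cI a 2) * (cI a 1 + cI a 3) ≡
      2 * ((dd a 0 + dd a 2) * (dd a 1 + dd a 3) + (dd a 4 + dd a 6) * (dd a 5 + dd a 7))
      [ZMOD 4] := by
  let s (i : ℕ) : ℤ := a i + a (i + 8)
  have hs (i : ℕ) : s i ≡ dd a i [ZMOD 2] :=
    Int.modEq_iff_dvd.mpr ⟨-a (i + 8), by simp only [s, dd]; ring⟩
  calc (bI a 0 + bI a 2) * (bI a 1 + bI a 3) + (cI a 0 + cI a 2) * (cI a 1 + cI a 3)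
      = 2 * ((s 0 + s 2) * (s 1 + s 3) + (s 4 + s 6) * (s 5 + s 7)) := by
        simp only [bI, cI, s, Nat.reduceAdd]
        ring
    _ ≡ _ [ZMOD 2 * 2] :=
        ((((hs 0).add (hs 2)).mul ((hs 1).add (hs 3))).add
          (((hs 4).add (hs 6)).mul ((hs 5).add (hs 7)))).mul_left'

theorem four_dvd_bI_mul_or_four_dvd_cI_mul {a : ℕ → ℤ}
    (hb : Odd (bI a 0 + bI a 2 + (bI a 1 + bI a 3)))
    (hd : Odd ((dd a 0 + dd a 2) * (dd a 1 + dd a 3) + (dd a 4 + dd a 6) * (dd a 5 + dd a 7))) :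
    4 ∣ (bI a 0 + bI a 2) * (bI a 1 + bI a 3) ∨ 4 ∣ (cI a 0 + cI a 2) * (cI a 1 + cI a 3) := by
  have h_sum := bI_mul_add_cI_mul_modEq a
  have hb_even := even_mul_of_odd_add hb
  rw [Int.even_iff] at hb_even
  rw [Int.odd_iff] at hd
  unfold Int.ModEq at h_sum
  omega

theorem stmt12 (a : ℕ → ℤ) (B : ℤ)
    (hB : (B : ℂ) = betaD (dd a) * (starRingEnd ℂ) (betaD (dd a)))
    (h1 : ¬ (bI a 0 + bI a 2 ≡ bI a 1 + bI a 3 [ZMOD 2]))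
    (h2 : bI a 0 * bI a 2 + bI a 1 * bI a 3 ≡ 1 [ZMOD 2])
    (h3 : B ≡ -3 [ZMOD 8]) :
    ((bI a 0 * bI a 2 + bI a 1 * bI a 3 ≡ cI a 0 * cI a 2 + cI a 1 * cI a 3 [ZMOD 4]) →
      ∃ k l : ℤ, (8 * l - 3) ∈ Pset ∧ k ≡ l [ZMOD 2] ∧
        D4 (bI a 0) (bI a 1) (bI a 2) (bI a 3) * D4 (cI a 0) (cI a 1) (cI a 2) (cI a 3) =
          (8 * k - 3) * (8 * l - 3)) ∧
    ((¬ (bI a 0 * bI a 2 + bI a 1 * bI a 3 ≡ cI a 0 * cI a 2 + cI a 1 * cI a 3 [ZMOD 4])) →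
      ∃ k l : ℤ, (8 * l - 3) ∈ Pset ∧ ¬ (k ≡ l [ZMOD 2]) ∧
        D4 (bI a 0) (bI a 1) (bI a 2) (bI a 3) * D4 (cI a 0) (cI a 1) (cI a 2) (cI a 3) =
          (8 * k - 3) * (8 * l - 3)) := by
  have hb_odd : Odd (bI a 0 + bI a 2 + (bI a 1 + bI a 3)) := by
    rw [Int.odd_iff]
    unfold Int.ModEq at h1
    omega
  have hTb : Odd (bI a 0 * bI a 2 + bI a 1 * bI a 3) := Int.odd_iff.mpr h2
  have h_mod := cI_modEq_bI a
  have h_mod₀₂ : cI a 0 + cI a 2 ≡ bI a 0 + bI a 2 [ZMOD 2] := (h_mod 0).add (h_mod 2)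
  have hc_odd : Odd (cI a 0 + cI a 2 + (cI a 1 + cI a 3)) :=
    (odd_iff_odd_of_modEq_two (h_mod₀₂.add ((h_mod 1).add (h_mod 3)))).mpr hb_odd
  have hTc : Odd (cI a 0 * cI a 2 + cI a 1 * cI a 3) :=
    (odd_iff_odd_of_modEq_two
      (((h_mod 0).mul (h_mod 2)).add ((h_mod 1).mul (h_mod 3)))).mpr hTb
  have h_four :=
    four_dvd_bI_mul_or_four_dvd_cI_mul hb_odd (odd_of_betaD_mul_conj_modEq hB h3)
  obtain ⟨k, l, hl, h_eq, h_iff⟩ :=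
    exists_D4_mul_D4_eq hb_odd hTb hc_odd hTc h_mod₀₂.symm h_four
  exact ⟨fun h => ⟨k, l, hl, h_iff.mpr h, h_eq⟩, fun h => ⟨k, l, hl, mt h_iff.mp h, h_eq⟩⟩
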